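/- There exists a nonzero Schwartz function f : ℝ → ℂ that is even (f(−x) = f(x) for all x) and satisfies f(n) = 0, f′(n) = 0, f̂(n) = 0, and (f̂)′(n) = 0 for every integer n ≥ 1, where f̂ is the Fourier transform of f. Consequently, even (radial) Schwartz functions on ℝ are not uniquely determined by the values f(n), f′(n), f̂(n), f̂′(n) for integers n ≥ 1. -/

import Mathlib

noncomputable section

/-- The Fourier transform `f̂(y) = ∫_ℝ f(x) e^{-2πixy} dx` of a Schwartz function on `ℝ`. -/
def FT (f : SchwartzMap ℝ ℂ) : SchwartzMap ℝ ℂ := SchwartzMap.fourierTransformCLM ℂ f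

/-!
The symmetric difference `g(x + a) - g(x - a)` exchanges even and odd functions and multiplies the
Fourier transform by `2i sin(2πay)`. Applying it with `a = 1` and then `a = 1/2` to an even bump
`φ` supported in `[-1/4, 1/4]` gives an even function `f` living near half-integers, hence zero near
every integer, while `f̂(y) = -4 sin(πy) sin(2πy) φ̂(y)` has a zero of order at least two at every
integer.
-/

open MeasureTheory
open scoped SchwartzMap FourierTransform RealInnerProductSpace Real

section CentralDiff

variable {V E : Type*} [NormedAddCommGroup V] [NormedSpace ℝ V]
  [NormedAddCommGroup E] [NormedSpace ℝ E]

/-- The symmetric difference `x ↦ g (x + a) - g (x - a)` of a Schwartz function `g`, with step `2a`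
and no normalizing factor. -/
def centralDiff (a : V) (g : 𝓢(V, E)) : 𝓢(V, E) :=
  g.compSubConstCLM ℝ (-a) - g.compSubConstCLM ℝ a

theorem centralDiff_apply (a : V) (g : 𝓢(V, E)) (x : V) :
    centralDiff a g x = g (x + a) - g (x - a) := by
  simp [centralDiff]

theorem odd_centralDiff (a : V) {g : 𝓢(V, E)} (hg : Function.Even g) :
    Function.Odd (centralDiff a g) := fun x ↦ by
  have neg_add_step : -x + a = -(x - a) := by abel
  have neg_sub_step : -x - a = -(x + a) := by abel
  rw [centralDiff_apply, centralDiff_apply, neg_add_step, neg_sub_step, hg, hg, neg_sub]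

theorem even_centralDiff (a : V) {g : 𝓢(V, E)} (hg : Function.Odd g) :
    Function.Even (centralDiff a g) := fun x ↦ by
  have neg_add_step : -x + a = -(x - a) := by abel
  have neg_sub_step : -x - a = -(x + a) := by abel
  rw [centralDiff_apply, centralDiff_apply, neg_add_step, neg_sub_step, hg, hg, neg_sub_neg]

theorem notMem_tsupport_centralDiff {a x : V} {g : 𝓢(V, E)}
    (hadd : x + a ∉ tsupport g) (hsub : x - a ∉ tsupport g) :
    x ∉ tsupport (centralDiff a g) := by
  rw [notMem_tsupport_iff_eventuallyEq] at hadd hsub ⊢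
  have add_tendsto : Filter.Tendsto (· + a) (nhds x) (nhds (x + a)) :=
    (continuous_add_const a).tendsto x
  have sub_tendsto : Filter.Tendsto (· - a) (nhds x) (nhds (x - a)) :=
    (continuous_sub_right a).tendsto x
  filter_upwards [add_tendsto.eventually hadd, sub_tendsto.eventually hsub] with y hy₁ hy₂
  simp [centralDiff_apply, hy₁, hy₂]

end CentralDiff

section Fourier

variable {V E : Type*} [NormedAddCommGroup V] [InnerProductSpace ℝ V] [FiniteDimensional ℝ V]
  [MeasurableSpace V] [BorelSpace V] [NormedAddCommGroup E] [NormedSpace ℂ E]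

theorem fourier_compSubConstCLM (a : V) (g : 𝓢(V, E)) (w : V) :
    𝓕 (g.compSubConstCLM ℝ a) w = 𝐞 (-⟪a, w⟫) • 𝓕 g w := by
  have translate : ⇑(g.compSubConstCLM ℝ a) = g ∘ fun v ↦ v + -a :=
    funext fun v ↦ congrArg g (sub_eq_add_neg v a)
  rw [SchwartzMap.fourier_coe, SchwartzMap.fourier_coe, translate, ← inner_neg_left]
  exact congrFun (VectorFourier.fourierIntegral_comp_add_right 𝐞 volume (innerₗ V) g (-a)) w

theorem coe_fourierChar_sub_fourierChar_neg (t : ℝ) :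
    (𝐞 t - 𝐞 (-t) : ℂ) = 2 * Complex.I * Real.sin (2 * π * t) := by
  rw [Real.fourierChar_apply, Real.fourierChar_apply, Complex.ofReal_sin, mul_neg,
    Complex.ofReal_neg]
  set θ : ℂ := ((2 * π * t : ℝ) : ℂ)
  linear_combination (-Complex.I) * Complex.two_sin θ +
    (Complex.exp (θ * Complex.I) - Complex.exp (-θ * Complex.I)) * Complex.I_sq

theorem fourier_centralDiff (a : V) (g : 𝓢(V, E)) (w : V) :
    𝓕 (centralDiff a g) w = (2 * Complex.I * Real.sin (2 * π * ⟪a, w⟫)) • 𝓕 g w := by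
  have fourier_sub : 𝓕 (centralDiff a g) w =
      𝓕 (g.compSubConstCLM ℝ (-a)) w - 𝓕 (g.compSubConstCLM ℝ a) w :=
    DFunLike.congr_fun (map_sub (SchwartzMap.fourierTransformCLM ℂ) _ _) w
  rw [fourier_sub, fourier_compSubConstCLM, fourier_compSubConstCLM, inner_neg_left, neg_neg,
    Circle.smul_def, Circle.smul_def, ← sub_smul, coe_fourierChar_sub_fourierChar_neg]

theorem fourier_centralDiff_eq_zero {a w : V} (hsin : Real.sin (2 * π * ⟪a, w⟫) = 0)
    (g : 𝓢(V, E)) : 𝓕 (centralDiff a g) w = 0 := by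
  rw [fourier_centralDiff, hsin, Complex.ofReal_zero, mul_zero, zero_smul]

theorem fderiv_fourier_centralDiff_eq_zero {a w : V} {g : 𝓢(V, E)}
    (hsin : Real.sin (2 * π * ⟪a, w⟫) = 0) (hg : 𝓕 g w = 0) :
    fderiv ℝ (𝓕 (centralDiff a g) : 𝓢(V, E)) w = 0 := by
  have sin_differentiable : DifferentiableAt ℝ (fun w ↦ Real.sin (2 * π * ⟪a, w⟫)) w :=
    ((innerSL ℝ a).differentiableAt.const_mul _).sin
  have multiplier_differentiable :
      DifferentiableAt ℝ (fun w ↦ 2 * Complex.I * Real.sin (2 * π * ⟪a, w⟫)) w :=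
    (Complex.ofRealCLM.differentiableAt.comp w sin_differentiable).const_mul _
  rw [funext (fourier_centralDiff a g), fderiv_fun_smul multiplier_differentiable
    (𝓕 g).differentiableAt, hsin, hg]
  simp

end Fourier

theorem exists_even_schwartzMap_tsupport_subset_closedBall {V E : Type*} [NormedAddCommGroup V]
    [NormedSpace ℝ V] [FiniteDimensional ℝ V] [HasContDiffBump V] [NormedAddCommGroup E]
    [NormedSpace ℝ E] {r : ℝ} (hr : 0 < r) (v : E) :
    ∃ φ : 𝓢(V, E), Function.Even φ ∧ φ 0 = v ∧ tsupport φ ⊆ Metric.closedBall 0 r := by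
  let b : ContDiffBump (0 : V) := ⟨r / 2, r, half_pos hr, half_lt_self hr⟩
  have hcompact : HasCompactSupport fun x ↦ b x • v := b.hasCompactSupport.smul_right
  have hsmooth : ContDiff ℝ (⊤ : ℕ∞) fun x ↦ b x • v := b.contDiff.smul contDiff_const
  refine ⟨hcompact.toSchwartzMap hsmooth, fun x ↦ ?_, ?_, ?_⟩
  · exact congrArg (· • v) (b.neg x)
  · have hb : b 0 = 1 := b.one_of_mem_closedBall (Metric.mem_closedBall_self b.rIn_pos.le)
    exact (congrArg (· • v) hb).trans (one_smul ℝ v)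
  · exact (tsupport_smul_subset_left b _).trans b.tsupport_eq.subset

theorem intCast_add_half_notMem_closedBall (k : ℤ) {r : ℝ} (hr : r < 1 / 2) :
    (k + 1 / 2 : ℝ) ∉ Metric.closedBall 0 r := by
  rw [mem_closedBall_zero_iff, Real.norm_eq_abs, not_le, lt_abs]
  rcases le_or_gt 0 k with hk | hk
  · have : (0 : ℝ) ≤ k := mod_cast hk
    left; linarith
  · have : (k : ℝ) + 1 ≤ 0 := mod_cast hk
    right; linarith

section HalfIntegers

variable {E : Type*} [NormedAddCommGroup E] [NormedSpace ℝ E] {φ : 𝓢(ℝ, E)} {r : ℝ}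

theorem intCast_notMem_tsupport_centralDiff_centralDiff
    (hr : r < 1 / 2) (hφ : tsupport φ ⊆ Metric.closedBall 0 r) (n : ℤ) :
    (n : ℝ) ∉ tsupport (centralDiff (1 / 2) (centralDiff 1 φ)) := by
  have half_integer {x : ℝ} (k : ℤ) (hx : x = k + 1 / 2) : x ∉ tsupport φ := fun hmem ↦
    intCast_add_half_notMem_closedBall k hr (hx ▸ hφ hmem)
  refine notMem_tsupport_centralDiff (notMem_tsupport_centralDiff ?_ ?_)
    (notMem_tsupport_centralDiff ?_ ?_)
  · exact half_integer (n + 1) (by push_cast; ring)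
  · exact half_integer (n - 1) (by push_cast; ring)
  · exact half_integer n (by ring)
  · exact half_integer (n - 2) (by push_cast; ring)

theorem centralDiff_centralDiff_apply_three_halves
    (hr : r < 1) (hφ : tsupport φ ⊆ Metric.closedBall 0 r) :
    centralDiff (1 / 2) (centralDiff 1 φ) (3 / 2) = φ 0 := by
  have eq_zero {x : ℝ} (hx : 1 ≤ x) : φ x = 0 := by
    refine image_eq_zero_of_notMem_tsupport fun hmem ↦ ?_
    have hxr := (le_abs_self x).trans (mem_closedBall_zero_iff.mp (hφ hmem))
    linarith
  norm_num [centralDiff_apply, eq_zero]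

end HalfIntegers

theorem FT_centralDiff_centralDiff_intCast (φ : 𝓢(ℝ, ℂ)) (n : ℤ) :
    FT (centralDiff (1 / 2) (centralDiff 1 φ)) n = 0 ∧
      deriv (FT (centralDiff (1 / 2) (centralDiff 1 φ))) n = 0 := by
  have sin_one : Real.sin (2 * π * ⟪(1 : ℝ), (n : ℝ)⟫) = 0 := by
    simpa [mul_comm, mul_left_comm] using Real.sin_int_mul_pi (2 * n)
  have sin_half : Real.sin (2 * π * ⟪(1 / 2 : ℝ), (n : ℝ)⟫) = 0 := by
    simpa [mul_comm, mul_left_comm] using Real.sin_int_mul_pi n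
  refine ⟨fourier_centralDiff_eq_zero sin_half _, ?_⟩
  have fderiv_eq_zero :=
    fderiv_fourier_centralDiff_eq_zero sin_half (fourier_centralDiff_eq_zero sin_one φ)
  exact fderiv_apply_one_eq_deriv.symm.trans (DFunLike.congr_fun fderiv_eq_zero 1)

theorem interpolation_fails_dim1_general :
    ∃ f : 𝓢(ℝ, ℂ), f ≠ 0 ∧ Function.Even f ∧
      ∀ n : ℤ, (n : ℝ) ∉ tsupport f ∧ FT f n = 0 ∧ deriv (FT f) n = 0 := by
  obtain ⟨φ, hφ_even, hφ_zero, hφ_supp⟩ :=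
    exists_even_schwartzMap_tsupport_subset_closedBall (V := ℝ) (r := 1 / 4) (by norm_num) (1 : ℂ)
  have apply_three_halves : centralDiff (1 / 2) (centralDiff 1 φ) (3 / 2) = 1 :=
    (centralDiff_centralDiff_apply_three_halves (by norm_num) hφ_supp).trans hφ_zero
  refine ⟨centralDiff (1 / 2) (centralDiff 1 φ), fun h ↦ ?_,
    even_centralDiff _ (odd_centralDiff _ hφ_even), fun n ↦
      ⟨intCast_notMem_tsupport_centralDiff_centralDiff (by norm_num) hφ_supp n,
        FT_centralDiff_centralDiff_intCast φ n⟩⟩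
  rw [h] at apply_three_halves
  exact zero_ne_one apply_three_halves

/-- Failure of interpolation in dimension 1: there exists a nonzero even (radial) Schwartz
function `f : ℝ → ℂ` such that `f`, `f′`, `f̂`, and `f̂′` all vanish at every integer `n ≥ 1`.
Hence even Schwartz functions on `ℝ` are not determined by this interpolation data. -/
theorem interpolation_fails_dim1 :
    ∃ f : SchwartzMap ℝ ℂ, f ≠ 0 ∧ (∀ x : ℝ, f (-x) = f x) ∧
      ∀ n : ℕ, 1 ≤ n →
        f (n : ℝ) = 0 ∧ deriv (⇑f) (n : ℝ) = 0 ∧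
        FT f (n : ℝ) = 0 ∧ deriv (⇑(FT f)) (n : ℝ) = 0 := by
  obtain ⟨f, hf, hf_even, h⟩ := interpolation_fails_dim1_general
  exact ⟨f, hf, hf_even, fun n _ ↦ have ⟨hn, hFT⟩ := h n
    ⟨image_eq_zero_of_notMem_tsupport hn, (HasDerivAt.of_notMem_tsupport hn).deriv, hFT⟩⟩

end
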